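/- Let γ be Gamma-distributed with shape m > 0 and mean γ̄ > 0, and let α > 0. Then ∫₀^∞ Q²(√(2αγ)) f_γ(γ) dγ = (1/4) I_{m/(m+αγ̄)}(m, 1/2) − R₂, where R₂ = (b^m/(4π)) ∫₀^∞ I_{1/(b+2+p)}(1/2, m) / (√p (1+p)(b+1+p)^m) dp with b = m/(αγ̄). -/

import Mathlib

open MeasureTheory Real Set

noncomputable def gaussQ (z : ℝ) : ℝ :=
  (Real.sqrt (2 * Real.pi))⁻¹ * ∫ t in Set.Ioi z, Real.exp (-t ^ 2 / 2)

noncomputable def incBeta (x a b : ℝ) : ℝ :=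
  ∫ t in (0:ℝ)..x, t ^ (a - 1) * (1 - t) ^ (b - 1)

noncomputable def regIncBeta (x a b : ℝ) : ℝ := incBeta x a b / incBeta 1 a b

noncomputable def nakagamiPdf (m γbar γ : ℝ) : ℝ :=
  (m / γbar) ^ m * γ ^ (m - 1) * Real.exp (-m * γ / γbar) / Real.Gamma m

lemma aux_swap (f : ℝ → ℝ → ℝ) (S T : Set ℝ) (hS : MeasurableSet S) (hT : MeasurableSet T)
    (hf : Measurable (Function.uncurry f))
    (h0 : ∀ x ∈ S, ∀ y ∈ T, 0 ≤ f x y)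
    (hi : ∀ x ∈ S, IntegrableOn (f x) T)
    (ho : IntegrableOn (fun x => ∫ y in T, f x y) S) :
    ∫ x in S, ∫ y in T, f x y = ∫ y in T, ∫ x in S, f x y := by
  apply integral_integral_swap
  rw [integrable_prod_iff hf.aestronglyMeasurable]
  constructor
  · filter_upwards [ae_restrict_mem hS] with x hx
    exact hi x hx
  · refine ho.congr_fun (fun x hx => ?_) hS
    refine setIntegral_congr_fun hT (fun y hy => ?_)
    simp only [Function.uncurry]
    rw [Real.norm_of_nonneg (h0 x hx y hy)]

lemma aux_gamma_int {a r : ℝ} (ha : 0 < a) (hr : 0 < r) :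
    IntegrableOn (fun t : ℝ => t ^ (a - 1) * Real.exp (-(r * t))) (Ioi 0) := by
  have := integrableOn_rpow_mul_exp_neg_mul_rpow (p := 1) (s := a - 1) (b := r)
    (by linarith) one_pos hr
  simpa using this

lemma aux_beta {a b : ℝ} (ha : 0 < a) (hb : 0 < b) :
    IntervalIntegrable (fun t : ℝ => t ^ (a - 1) * (1 - t) ^ (b - 1)) volume 0 1 ∧
    incBeta 1 a b = Real.Gamma a * Real.Gamma b / Real.Gamma (a + b) := by
  have key : ∀ t ∈ Set.uIcc (0:ℝ) 1, (t:ℂ) ^ ((a:ℂ) - 1) * (1 - (t:ℂ)) ^ ((b:ℂ) - 1)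
      = ((t ^ (a - 1) * (1 - t) ^ (b - 1) : ℝ) : ℂ) := by
    intro t ht
    rw [Set.uIcc_of_le zero_le_one] at ht
    rw [Complex.ofReal_mul, Complex.ofReal_cpow ht.1, Complex.ofReal_cpow (by linarith [ht.2])]
    push_cast
    rfl
  have hc := Complex.betaIntegral_convergent (u := a) (v := b) (by simpa) (by simpa)
  have hc' : IntervalIntegrable (fun t : ℝ => ((t ^ (a - 1) * (1 - t) ^ (b - 1) : ℝ) : ℂ))
      volume 0 1 :=
    hc.congr (fun t ht => key t (Set.uIoc_subset_uIcc ht))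
  refine ⟨?_, ?_⟩
  · have := hc'.1.re
    have h2 := hc'.2.re
    exact ⟨this, h2⟩
  · have h1 := ProbabilityTheory.beta_eq_betaIntegralReal a b ha hb
    rw [Complex.betaIntegral, intervalIntegral.integral_congr key,
      intervalIntegral.integral_ofReal, Complex.ofReal_re] at h1
    rw [incBeta, ← h1, ProbabilityTheory.beta]

lemma aux_symm {a b x : ℝ} (ha : 0 < a) (hb : 0 < b) (hx : 0 ≤ x) (hx1 : x ≤ 1) :
    regIncBeta (1 - x) a b = 1 - regIncBeta x b a := by
  have h1 := aux_beta ha hb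
  have h2 := aux_beta hb ha
  have hpos : 0 < incBeta 1 b a := by
    rw [h2.2]
    have := Real.Gamma_pos_of_pos ha
    have := Real.Gamma_pos_of_pos hb
    have := Real.Gamma_pos_of_pos (add_pos hb ha)
    positivity
  have he : incBeta 1 a b = incBeta 1 b a := by
    rw [h1.2, h2.2, add_comm, mul_comm]
  have h3 : incBeta (1 - x) a b = ∫ t in x..1, t ^ (b - 1) * (1 - t) ^ (a - 1) := by
    have := intervalIntegral.integral_comp_sub_left (a := x) (b := 1)
      (fun t : ℝ => t ^ (a - 1) * (1 - t) ^ (b - 1)) 1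
    simp only [sub_self, sub_sub_cancel] at this
    rw [incBeta, ← this]
    exact intervalIntegral.integral_congr (fun t _ => mul_comm _ _)
  have hadd : incBeta x b a + ∫ t in x..1, t ^ (b - 1) * (1 - t) ^ (a - 1) = incBeta 1 b a := by
    apply intervalIntegral.integral_add_adjacent_intervals
    · exact h2.1.mono_set (by rw [uIcc_of_le hx, uIcc_of_le zero_le_one]; exact Icc_subset_Icc_right hx1)
    · exact h2.1.mono_set (by rw [uIcc_of_le hx1, uIcc_of_le zero_le_one]; exact Icc_subset_Icc_left hx)
  rw [regIncBeta, regIncBeta, he, h3]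
  field_simp
  linarith

/-- `2 Q(√(2x))` as an incomplete gamma integral. -/
lemma aux_Q {x : ℝ} (hx : 0 ≤ x) : 2 * gaussQ (Real.sqrt (2 * x)) =
    (Real.sqrt Real.pi)⁻¹ * ∫ u in Ioi x, u ^ ((1:ℝ) / 2 - 1) * Real.exp (-(1 * u)) := by
  have himg : (fun u : ℝ => Real.sqrt (2 * u)) '' Ioi x = Ioi (Real.sqrt (2 * x)) := by
    ext t
    constructor
    · rintro ⟨u, hu, rfl⟩
      have : x < u := hu
      exact Real.sqrt_lt_sqrt (by linarith) (by linarith)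
    · intro ht
      have ht' : Real.sqrt (2 * x) < t := ht
      have ht0 : 0 < t := lt_of_le_of_lt (Real.sqrt_nonneg _) ht'
      refine ⟨t ^ 2 / 2, ?_, ?_⟩
      · have := (Real.sqrt_lt' ht0).1 ht'
        show x < t ^ 2 / 2
        linarith
      · show Real.sqrt (2 * (t ^ 2 / 2)) = t
        rw [show 2 * (t ^ 2 / 2) = t ^ 2 by ring, Real.sqrt_sq ht0.le]
  have hd : ∀ u ∈ Ioi x, HasDerivWithinAt (fun u : ℝ => Real.sqrt (2 * u))
      (2 / (2 * Real.sqrt (2 * u))) (Ioi x) u := by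
    intro u hu
    have : 0 < u := lt_of_le_of_lt hx hu
    have h1 : HasDerivAt (fun u : ℝ => 2 * u) 2 u := by
      simpa using (hasDerivAt_id u).const_mul 2
    exact (h1.sqrt (by positivity)).hasDerivWithinAt
  have hinj : InjOn (fun u : ℝ => Real.sqrt (2 * u)) (Ioi x) := by
    intro u hu v hv h
    have h1 : 0 < u := lt_of_le_of_lt hx hu
    have h2 : 0 < v := lt_of_le_of_lt hx hv
    have := (Real.sqrt_inj (by positivity) (by positivity)).1 h
    linarith
  have h := integral_image_eq_integral_abs_deriv_smul measurableSet_Ioi hd hinj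
    (fun t => Real.exp (-t ^ 2 / 2))
  rw [himg] at h
  rw [gaussQ, h, ← integral_const_mul, ← integral_const_mul, ← integral_const_mul]
  refine setIntegral_congr_fun measurableSet_Ioi (fun u hu => ?_)
  have hu0 : 0 < u := lt_of_le_of_lt hx hu
  simp only [smul_eq_mul]
  rw [abs_of_pos (by positivity), Real.sq_sqrt (by positivity),
    show -(2 * u) / 2 = -(1 * u) by ring, show (1:ℝ) / 2 - 1 = -(1 / 2) by norm_num,
    Real.rpow_neg hu0.le, ← Real.sqrt_eq_rpow, Real.sqrt_mul (by norm_num) u,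
    Real.sqrt_mul (by norm_num) Real.pi]
  have h2 : Real.sqrt 2 * Real.sqrt 2 = 2 := Real.mul_self_sqrt (by norm_num)
  have : Real.sqrt 2 ≠ 0 := by positivity
  have : Real.sqrt u ≠ 0 := by positivity
  have : Real.sqrt Real.pi ≠ 0 := by positivity
  field_simp
  nlinarith

/-- the error function of `√x` -/
noncomputable def er (x : ℝ) : ℝ := 1 - 2 * gaussQ (Real.sqrt (2 * x))

lemma er_eq {x : ℝ} (hx : 0 ≤ x) : er x =
    (Real.sqrt Real.pi)⁻¹ * ∫ u in Ioc 0 x, u ^ ((1:ℝ) / 2 - 1) * Real.exp (-(1 * u)) := by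
  have hi := aux_gamma_int (a := 1 / 2) (r := 1) (by norm_num) one_pos
  have h := integral_rpow_mul_exp_neg_mul_Ioi (a := 1 / 2) (r := 1) (by norm_num) one_pos
  rw [← Ioc_union_Ioi_eq_Ioi hx, setIntegral_union (Ioc_disjoint_Ioi le_rfl) measurableSet_Ioi
    (hi.mono_set Ioc_subset_Ioi_self) (hi.mono_set (Ioi_subset_Ioi hx)), Real.Gamma_one_half_eq] at h
  simp only [div_one, one_rpow, one_mul] at h
  rw [er, aux_Q hx]
  have : Real.sqrt Real.pi ≠ 0 := by positivity
  simp only [one_mul] at h ⊢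
  field_simp
  linarith

lemma er_eq' {x : ℝ} (hx : 0 < x) : er x =
    (Real.sqrt Real.pi)⁻¹ * ∫ s in Ioc (0:ℝ) 1,
      x ^ ((1:ℝ) / 2) * s ^ ((1:ℝ) / 2 - 1) * Real.exp (-(x * s)) := by
  rw [er_eq hx.le, ← intervalIntegral.integral_of_le hx.le,
    ← intervalIntegral.integral_of_le zero_le_one]
  have := intervalIntegral.integral_comp_mul_left (a := 0) (b := 1)
    (fun u : ℝ => u ^ ((1:ℝ) / 2 - 1) * Real.exp (-(1 * u))) hx.ne'
  simp only [mul_zero, mul_one, smul_eq_mul] at this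
  rw [← mul_inv_cancel_left₀ hx.ne' (∫ u in (0:ℝ)..x, u ^ ((1:ℝ) / 2 - 1) * Real.exp (-(1 * u))),
    ← this, ← intervalIntegral.integral_const_mul]
  congr 1
  refine intervalIntegral.integral_congr (fun s hs => ?_)
  rw [uIcc_of_le zero_le_one] at hs
  try beta_reduce
  rw [Real.mul_rpow hx.le hs.1, Real.rpow_sub_one hx.ne', one_mul]
  field_simp

lemma er_nonneg {x : ℝ} (hx : 0 ≤ x) : 0 ≤ er x := by
  rw [er_eq hx]
  refine mul_nonneg (by positivity) (setIntegral_nonneg measurableSet_Ioc (fun u hu => ?_))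
  have := hu.1
  positivity

lemma er_le {x : ℝ} : er x ≤ 1 := by
  have : 0 ≤ gaussQ (Real.sqrt (2 * x)) :=
    mul_nonneg (by positivity) (setIntegral_nonneg measurableSet_Ioi (fun u hu => by positivity))
  rw [er]; linarith

lemma er_meas : Measurable er := by
  have : Antitone gaussQ := by
    intro a b hab
    refine mul_le_mul_of_nonneg_left ?_ (by positivity)
    refine setIntegral_mono_set ?_ (by filter_upwards with t; positivity)
      (Ioi_subset_Ioi hab).eventuallyLE
    have := (integrable_exp_neg_mul_sq (b := 1 / 2) (by norm_num)).integrableOn (s := Ioi a)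
    refine this.congr_fun (fun t _ => ?_) measurableSet_Ioi
    try beta_reduce
    congr 1; ring
  have hm := this.measurable
  unfold er
  fun_prop

lemma aux_B {x : ℝ} (hx : 0 < x) : 1 - er x = Real.pi⁻¹ *
    ∫ p in Ioi (0:ℝ), Real.exp (-(x * (1 + p))) / (Real.sqrt p * (1 + p)) := by
  have hin : ∀ u ∈ Ioi x, ∫ p in Ioi (0:ℝ), Real.exp (-u) * (p ^ ((1:ℝ) / 2 - 1) * Real.exp (-(u * p)))
      = Real.sqrt Real.pi * (u ^ ((1:ℝ) / 2 - 1) * Real.exp (-(1 * u))) := by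
    intro u hu
    have hu0 : 0 < u := lt_trans hx hu
    rw [integral_const_mul, integral_rpow_mul_exp_neg_mul_Ioi (by norm_num) hu0,
      Real.Gamma_one_half_eq, one_div, Real.inv_rpow hu0.le, ← Real.rpow_neg hu0.le]
    norm_num
    ring
  have hsw := aux_swap (fun u p => Real.exp (-u) * (p ^ ((1:ℝ) / 2 - 1) * Real.exp (-(u * p))))
    (Ioi x) (Ioi 0) measurableSet_Ioi measurableSet_Ioi
    (by unfold Function.uncurry; fun_prop)
    (fun u _ p hp => by have : (0:ℝ) < p := hp; positivity)
    (fun u hu => (aux_gamma_int (by norm_num) (lt_trans hx hu)).const_mul _)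
    (by
      refine IntegrableOn.congr_fun ?_ (fun u hu => (hin u hu).symm) measurableSet_Ioi
      exact ((aux_gamma_int (a := 1 / 2) (r := 1) (by norm_num) one_pos).mono_set
        (Ioi_subset_Ioi hx.le)).const_mul _)
  rw [setIntegral_congr_fun measurableSet_Ioi hin, integral_const_mul] at hsw
  have hout : ∀ p ∈ Ioi (0:ℝ), ∫ u in Ioi x, Real.exp (-u) * (p ^ ((1:ℝ) / 2 - 1) * Real.exp (-(u * p)))
      = Real.exp (-(x * (1 + p))) / (Real.sqrt p * (1 + p)) := by
    intro p hp
    have hp0 : 0 < p := hp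
    have h1 : ∀ u : ℝ, Real.exp (-u) * (p ^ ((1:ℝ) / 2 - 1) * Real.exp (-(u * p)))
        = p ^ ((1:ℝ) / 2 - 1) * Real.exp (-(1 + p) * u) := by
      intro u
      rw [show -(1 + p) * u = -u + -(u * p) by ring, Real.exp_add]
      ring
    simp_rw [h1]
    rw [integral_const_mul, integral_exp_mul_Ioi (by linarith),
      show (1:ℝ) / 2 - 1 = -(1 / 2) by norm_num, Real.rpow_neg hp0.le, ← Real.sqrt_eq_rpow,
      show -(1 + p) * x = -(x * (1 + p)) by ring]
    have : Real.sqrt p ≠ 0 := by positivity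
    have : 1 + p ≠ 0 := by positivity
    have : -1 - p ≠ 0 := by linarith
    field_simp
  rw [setIntegral_congr_fun measurableSet_Ioi hout] at hsw
  rw [← hsw, er, sub_sub_cancel, aux_Q hx.le]
  have hs : Real.sqrt Real.pi * Real.sqrt Real.pi = Real.pi := Real.mul_self_sqrt Real.pi_pos.le
  have : Real.sqrt Real.pi ≠ 0 := by positivity
  have h5 : Real.pi⁻¹ = (Real.sqrt Real.pi)⁻¹ * (Real.sqrt Real.pi)⁻¹ := by
    rw [← mul_inv, hs]
  rw [h5]
  field_simp

lemma aux_sub {m c : ℝ} (hc : 0 < c) : incBeta (1 / (1 + c)) (1 / 2) m =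
    c ^ m * ∫ s in Ioc (0:ℝ) 1, s ^ ((1:ℝ) / 2 - 1) * (c + s) ^ (-(m + 1 / 2)) := by
  have himg : (fun s : ℝ => s / (c + s)) '' Ioc 0 1 = Ioc 0 (1 / (1 + c)) := by
    ext t
    constructor
    · rintro ⟨s, ⟨hs0, hs1⟩, rfl⟩
      refine ⟨by positivity, ?_⟩
      show s / (c + s) ≤ 1 / (1 + c)
      rw [div_le_div_iff₀ (by positivity) (by positivity)]
      nlinarith
    · rintro ⟨ht0, ht1⟩
      rw [le_div_iff₀ (by positivity)] at ht1
      have h1 : 0 < 1 - t := by nlinarith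
      refine ⟨c * t / (1 - t), ⟨by positivity, ?_⟩, ?_⟩
      · rw [div_le_one h1]; linarith
      · show c * t / (1 - t) / (c + c * t / (1 - t)) = t
        have : c + c * t / (1 - t) = c / (1 - t) := by field_simp; ring
        rw [this]
        field_simp
  have hd : ∀ s ∈ Ioc (0:ℝ) 1, HasDerivWithinAt (fun s : ℝ => s / (c + s))
      (c / (c + s) ^ 2) (Ioc 0 1) s := by
    intro s hs
    have := hs.1
    have h1 : HasDerivAt (fun s : ℝ => s / (c + s)) ((1 * (c + s) - s * 1) / (c + s) ^ 2) s :=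
      (hasDerivAt_id s).div ((hasDerivAt_id s).const_add c) (by positivity)
    exact (h1.congr_deriv (by ring)).hasDerivWithinAt
  have hinj : InjOn (fun s : ℝ => s / (c + s)) (Ioc 0 1) := by
    intro u hu v hv h
    have h1 := hu.1
    have h2 := hv.1
    try beta_reduce at h
    rw [div_eq_div_iff (by positivity) (by positivity)] at h
    have : c * (u - v) = 0 := by linarith
    rcases mul_eq_zero.1 this with h | h <;> linarith
  have h := integral_image_eq_integral_abs_deriv_smul measurableSet_Ioc hd hinj
    (fun t => t ^ ((1:ℝ) / 2 - 1) * (1 - t) ^ (m - 1))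
  rw [himg] at h
  rw [incBeta, intervalIntegral.integral_of_le (by positivity), h, ← integral_const_mul]
  refine setIntegral_congr_fun measurableSet_Ioc (fun s hs => ?_)
  have hs0 := hs.1
  have hcs : 0 < c + s := by positivity
  have hpow : (c + s) ^ (-(m + 1 / 2)) =
      ((c + s) ^ ((1:ℝ) / 2 - 1))⁻¹ / (c + s) ^ (m - 1) / (c + s) ^ 2 := by
    rw [← Real.rpow_neg hcs.le, ← Real.rpow_natCast (c + s) 2, ← Real.rpow_sub hcs,
      ← Real.rpow_sub hcs]
    congr 1
    push_cast
    ring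
  simp only [smul_eq_mul]
  rw [abs_of_pos (by positivity), show 1 - s / (c + s) = c / (c + s) by field_simp; ring,
    Real.div_rpow hs0.le hcs.le, Real.div_rpow hc.le hcs.le, Real.rpow_sub_one hc.ne',
    hpow]
  have : (c + s) ^ ((1:ℝ) / 2 - 1) ≠ 0 := by positivity
  have : (c + s) ^ (m - 1) ≠ 0 := by positivity
  field_simp

lemma aux_C {m c : ℝ} (hm : 0 < m) (hc : 0 < c) :
    ∫ x in Ioi (0:ℝ), x ^ (m - 1) * Real.exp (-(c * x)) * er x =
      Real.Gamma m / c ^ m * regIncBeta (1 / (1 + c)) (1 / 2) m := by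
  have hin : ∀ s ∈ Ioc (0:ℝ) 1, ∫ x in Ioi (0:ℝ), s ^ ((1:ℝ) / 2 - 1) *
      (x ^ (m + 1 / 2 - 1) * Real.exp (-((c + s) * x)))
      = Real.Gamma (m + 1 / 2) * (s ^ ((1:ℝ) / 2 - 1) * (c + s) ^ (-(m + 1 / 2))) := by
    intro s hs
    have := hs.1
    have hcs : 0 < c + s := by positivity
    rw [integral_const_mul, integral_rpow_mul_exp_neg_mul_Ioi (by positivity) hcs, one_div (c + s),
      Real.inv_rpow hcs.le, ← Real.rpow_neg hcs.le]
    ring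
  have hsw := aux_swap (fun s x => s ^ ((1:ℝ) / 2 - 1) *
      (x ^ (m + 1 / 2 - 1) * Real.exp (-((c + s) * x)))) (Ioc 0 1) (Ioi 0) measurableSet_Ioc
    measurableSet_Ioi (by unfold Function.uncurry; fun_prop)
    (fun u hu p hp => by have : (0:ℝ) < p := hp; have := hu.1; positivity)
    (fun u hu => (aux_gamma_int (by positivity) (by linarith [hu.1])).const_mul _)
    (by
      refine IntegrableOn.congr_fun ?_ (fun u hu => (hin u hu).symm) measurableSet_Ioc
      refine Integrable.const_mul ?_ _
      have h1 : IntegrableOn (fun s : ℝ => s ^ ((1:ℝ) / 2 - 1)) (Ioc 0 1) := by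
        have := intervalIntegral.intervalIntegrable_rpow' (a := 0) (b := 1) (r := (1:ℝ) / 2 - 1)
          (by norm_num)
        rwa [intervalIntegrable_iff_integrableOn_Ioc_of_le zero_le_one] at this
      refine Integrable.mono' (h1.mul_const (c ^ (-(m + 1 / 2))))
        (by apply Measurable.aestronglyMeasurable; fun_prop) ?_
      filter_upwards [ae_restrict_mem measurableSet_Ioc] with s hs
      have hs0 := hs.1
      rw [Real.norm_of_nonneg (by positivity)]
      refine mul_le_mul_of_nonneg_left ?_ (by positivity)
      exact Real.rpow_le_rpow_of_nonpos hc (by linarith) (by linarith))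
  rw [setIntegral_congr_fun measurableSet_Ioc hin, integral_const_mul] at hsw
  have hout : ∀ x ∈ Ioi (0:ℝ), x ^ (m - 1) * Real.exp (-(c * x)) * er x
      = (Real.sqrt Real.pi)⁻¹ * ∫ s in Ioc (0:ℝ) 1, s ^ ((1:ℝ) / 2 - 1) *
      (x ^ (m + 1 / 2 - 1) * Real.exp (-((c + s) * x))) := by
    intro x hx
    have hx0 : 0 < x := hx
    rw [er_eq' hx0, mul_left_comm, ← integral_const_mul]
    congr 1
    refine setIntegral_congr_fun measurableSet_Ioc (fun s hs => ?_)
    try beta_reduce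
    rw [show m + 1 / 2 - 1 = (m - 1) + 1 / 2 by ring, Real.rpow_add hx0,
      show -((c + s) * x) = -(c * x) + -(x * s) by ring, Real.exp_add]
    ring
  rw [setIntegral_congr_fun measurableSet_Ioi hout, integral_const_mul, ← hsw, regIncBeta,
    aux_sub hc, (aux_beta (by norm_num) hm).2, Real.Gamma_one_half_eq, add_comm (1 / 2) m]
  have := Real.Gamma_pos_of_pos hm
  have := Real.Gamma_pos_of_pos (show 0 < m + 1 / 2 by positivity)
  have : 0 < c ^ m := by positivity
  field_simp

lemma aux_int {m b : ℝ} (hm : 0 < m) (hb : 0 < b) (g : ℝ → ℝ) (hg : Measurable g)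
    (h0 : ∀ x ∈ Ioi (0:ℝ), |g x| ≤ 1) :
    IntegrableOn (fun x => x ^ (m - 1) * Real.exp (-(b * x)) * g x) (Ioi 0) := by
  refine Integrable.mono' (aux_gamma_int hm hb)
    (by apply Measurable.aestronglyMeasurable; fun_prop) ?_
  filter_upwards [ae_restrict_mem measurableSet_Ioi] with x hx
  have hx0 : 0 < x := hx
  rw [norm_mul, Real.norm_of_nonneg (by positivity), Real.norm_eq_abs]
  exact mul_le_of_le_one_right (by positivity) (h0 x hx)

lemma er_abs {x : ℝ} (hx : x ∈ Ioi (0:ℝ)) : |er x| ≤ 1 := by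
  have h1 := er_nonneg (le_of_lt hx)
  have h2 := er_le (x := x)
  rw [abs_le]; constructor <;> linarith

lemma er_abs' {x : ℝ} (hx : x ∈ Ioi (0:ℝ)) : |(1 - er x) * er x| ≤ 1 := by
  have h1 := er_nonneg (le_of_lt hx)
  have h2 := er_le (x := x)
  rw [abs_le]; constructor <;> nlinarith

lemma aux_D {m b : ℝ} (hm : 0 < m) (hb : 0 < b) :
    ∫ x in Ioi (0:ℝ), x ^ (m - 1) * Real.exp (-(b * x)) * ((1 - er x) * er x) =
      Real.pi⁻¹ * Real.Gamma m * ∫ p in Ioi (0:ℝ), regIncBeta (1 / (b + 2 + p)) (1 / 2) m /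
              (Real.sqrt p * (1 + p) * (b + 1 + p) ^ m) := by
  have her := er_meas
  have hin : ∀ x ∈ Ioi (0:ℝ), ∫ p in Ioi (0:ℝ), x ^ (m - 1) * Real.exp (-(b * x)) * er x *
      (Real.exp (-(x * (1 + p))) / (Real.sqrt p * (1 + p))) =
      Real.pi * (x ^ (m - 1) * Real.exp (-(b * x)) * ((1 - er x) * er x)) := by
    intro x hx
    rw [integral_const_mul, aux_B hx]
    have := Real.pi_ne_zero
    field_simp
  have hsw := aux_swap (fun x p => x ^ (m - 1) * Real.exp (-(b * x)) * er x *
      (Real.exp (-(x * (1 + p))) / (Real.sqrt p * (1 + p)))) (Ioi 0) (Ioi 0) measurableSet_Ioi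
    measurableSet_Ioi (by unfold Function.uncurry; fun_prop)
    (fun x hx p hp => by
      have : (0:ℝ) < p := hp
      have : (0:ℝ) < x := hx
      have := er_nonneg this.le
      positivity)
    (fun x hx => by
      refine Integrable.const_mul ?_ _
      refine Integrable.mono' (aux_gamma_int (a := 1 / 2) (by norm_num) hx)
        (by apply Measurable.aestronglyMeasurable; fun_prop) ?_
      filter_upwards [ae_restrict_mem measurableSet_Ioi] with p hp
      have hp0 : 0 < p := hp
      have hx0 : 0 < x := hx
      rw [Real.norm_of_nonneg (by positivity), show (1:ℝ) / 2 - 1 = -(1 / 2) by norm_num,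
        Real.rpow_neg hp0.le, ← Real.sqrt_eq_rpow, div_eq_mul_inv, mul_comm]
      refine mul_le_mul ?_ (Real.exp_le_exp.2 (by nlinarith)) (by positivity) (by positivity)
      refine inv_anti₀ (by positivity) ?_
      exact le_mul_of_one_le_right (by positivity) (by linarith))
    (by
      refine IntegrableOn.congr_fun ?_ (fun u hu => (hin u hu).symm) measurableSet_Ioi
      exact (aux_int hm hb (fun x => (1 - er x) * er x) (by fun_prop)
        (fun x hx => er_abs' hx)).const_mul _)
  rw [setIntegral_congr_fun measurableSet_Ioi hin, integral_const_mul] at hsw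
  have hout : ∀ p ∈ Ioi (0:ℝ), ∫ x in Ioi (0:ℝ), x ^ (m - 1) * Real.exp (-(b * x)) * er x *
      (Real.exp (-(x * (1 + p))) / (Real.sqrt p * (1 + p))) =
      Real.Gamma m * (regIncBeta (1 / (b + 2 + p)) (1 / 2) m /
              (Real.sqrt p * (1 + p) * (b + 1 + p) ^ m)) := by
    intro p hp
    have hp0 : 0 < p := hp
    have h1 : ∀ x : ℝ, x ^ (m - 1) * Real.exp (-(b * x)) * er x *
      (Real.exp (-(x * (1 + p))) / (Real.sqrt p * (1 + p))) =
      (Real.sqrt p * (1 + p))⁻¹ * (x ^ (m - 1) * Real.exp (-((b + 1 + p) * x)) * er x) := by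
      intro x
      rw [show -((b + 1 + p) * x) = -(b * x) + -(x * (1 + p)) by ring, Real.exp_add]
      ring
    simp_rw [h1]
    rw [integral_const_mul, aux_C hm (by positivity), show 1 + (b + 1 + p) = b + 2 + p by ring]
    have : Real.sqrt p ≠ 0 := by positivity
    have : (b + 1 + p) ^ m ≠ 0 := by positivity
    field_simp
  rw [setIntegral_congr_fun measurableSet_Ioi hout, integral_const_mul] at hsw
  rw [mul_assoc, ← hsw]
  have := Real.pi_ne_zero
  field_simp

lemma aux_main {m b : ℝ} (hm : 0 < m) (hb : 0 < b) :
    ∫ x in Ioi (0:ℝ), x ^ (m - 1) * Real.exp (-(b * x)) * (1 - er x) ^ 2 =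
      Real.Gamma m / b ^ m * regIncBeta (b / (1 + b)) m (1 / 2) -
      Real.pi⁻¹ * Real.Gamma m * ∫ p in Ioi (0:ℝ), regIncBeta (1 / (b + 2 + p)) (1 / 2) m /
              (Real.sqrt p * (1 + p) * (b + 1 + p) ^ m) := by
  have her := er_meas
  rw [← aux_D hm hb, show b / (1 + b) = 1 - 1 / (1 + b) by field_simp; ring,
    aux_symm hm (by norm_num) (by positivity) (by rw [div_le_one] <;> linarith), mul_sub,
    ← aux_C hm hb, mul_one]
  have h := integral_rpow_mul_exp_neg_mul_Ioi hm hb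
  rw [show (1 / b) ^ m * Real.Gamma m = Real.Gamma m / b ^ m by
    rw [one_div, Real.inv_rpow hb.le]; field_simp] at h
  rw [← h, ← integral_sub (aux_gamma_int hm hb) (aux_int hm hb er her (fun x hx => er_abs hx)),
    ← integral_sub (f := fun x => x ^ (m - 1) * Real.exp (-(b * x)) -
        x ^ (m - 1) * Real.exp (-(b * x)) * er x)
      ((aux_gamma_int hm hb).sub (aux_int hm hb er her (fun x hx => er_abs hx)))
      (aux_int hm hb (fun x => (1 - er x) * er x) (by fun_prop) (fun x hx => er_abs' hx))]
  congr 1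
  ext x
  ring

theorem lemma3_avg_Qsq_nakagami (m γbar α : ℝ) (hm : 0 < m) (hγ : 0 < γbar) (hα : 0 < α) :
    ∫ γ in Set.Ioi (0:ℝ), gaussQ (Real.sqrt (2 * α * γ)) ^ 2 * nakagamiPdf m γbar γ =
      (1 / 4) * regIncBeta (m / (m + α * γbar)) m (1 / 2) -
        ((m / (α * γbar)) ^ m / (4 * Real.pi)) *
          ∫ p in Set.Ioi (0:ℝ),
            regIncBeta (1 / (m / (α * γbar) + 2 + p)) (1 / 2) m /
              (Real.sqrt p * (1 + p) * (m / (α * γbar) + 1 + p) ^ m) := by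
  have hb : 0 < m / (α * γbar) := by positivity
  have hG := Real.Gamma_pos_of_pos hm
  have hmain := aux_main hm hb
  rw [show m / (m + α * γbar) = (m / (α * γbar)) / (1 + m / (α * γbar)) by field_simp; ring]
  have hs := integral_comp_mul_left_Ioi
    (fun x => x ^ (m - 1) * Real.exp (-(m / (α * γbar) * x)) * (1 - er x) ^ 2) 0 hα
  rw [mul_zero, smul_eq_mul, hmain] at hs
  have hI : ∀ γ ∈ Ioi (0:ℝ), gaussQ (Real.sqrt (2 * α * γ)) ^ 2 * nakagamiPdf m γbar γ =
      ((m / (α * γbar)) ^ m * α / (4 * Real.Gamma m)) * ((α * γ) ^ (m - 1) *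
        Real.exp (-(m / (α * γbar) * (α * γ))) * (1 - er (α * γ)) ^ 2) := by
    intro γ h
    have h0 : 0 < γ := h
    rw [nakagamiPdf, er, Real.mul_rpow hα.le h0.le, Real.rpow_sub_one hα.ne',
      show m / (α * γbar) = (m / γbar) / α by field_simp, Real.div_rpow (by positivity) hα.le,
      show -(m / γbar / α * (α * γ)) = -m * γ / γbar by field_simp,
      show 2 * (α * γ) = 2 * α * γ by ring]
    have : α ^ m ≠ 0 := by positivity
    field_simp
    ring
  rw [setIntegral_congr_fun measurableSet_Ioi hI, integral_const_mul, hs]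
  have : (m / (α * γbar)) ^ m ≠ 0 := by positivity
  have := Real.pi_ne_zero
  generalize (m / (α * γbar)) ^ m = B at *
  field_simp
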